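/- arXiv:0807.1170 — 2 statements merged into one kernel-verified Lean document; each statement's English description precedes it below -/
import Mathlib

section
/- Let p be a prime, K a finite extension of ℚ_p, and let L = K(√d) and E = K(√e) be two non-K-isomorphic quadratic extensions of K inside a fixed algebraic closure (d, e ∈ K* non-squares, de ∉ (K*)²). Let LE be the compositum and fix a square root √e ∈ E of e. Then: (a) −e ∈ N_{L/K}(L*) if and only if −√e ∈ N_{LE/E}((LE)*); and (b) for every x ∈ K* with x(x² − e) ∈ N_{L/K}(L*), one has x ∈ N_{L/K}(L*) if and only if x − √e ∈ N_{LE/E}((LE)*). -/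
open Module

/-- `normGroup K L` is the set of norms `N_{L/K}(t)` of nonzero elements `t ∈ L`. -/
def normGroup (K L : Type*) [Field K] [Field L] [Algebra K L] : Set K :=
  {x : K | ∃ t : L, t ≠ 0 ∧ Algebra.norm K t = x}

lemma norm_eq_one_of_norm_sub_one_lt {F : Type*} [NormedField F] [IsUltrametricDist F] {x : F}
    (hx : ‖x - 1‖ < 1) : ‖x‖ = 1 := by
  have := IsUltrametricDist.norm_add_eq_max_of_norm_ne_norm (x := x - 1) (y := 1)
    (by rw [norm_one]; exact hx.ne)
  rwa [sub_add_cancel, norm_one, max_eq_right hx.le] at this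

/-- The subgroup of units `u` with `‖u - 1‖ ≤ r`. -/
def principalUnits (F : Type*) [NormedField F] [IsUltrametricDist F] (r : ℝ) (hr : 0 ≤ r)
    (hr1 : r < 1) : Subgroup Fˣ where
  carrier := {u | ‖(u : F) - 1‖ ≤ r}
  one_mem' := by simpa using hr
  mul_mem' := by
    intro a b ha hb
    simp only [Set.mem_ofPred_eq, Units.val_mul] at *
    have h : (a : F) * b - 1 = ((a - 1) * (b - 1) + (a - 1)) + (b - 1) := by ring
    rw [h]
    refine (IsUltrametricDist.norm_add_le_max _ _).trans (max_le ?_ hb)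
    refine (IsUltrametricDist.norm_add_le_max _ _).trans (max_le ?_ ha)
    rw [norm_mul]
    nlinarith [norm_nonneg ((a : F) - 1), norm_nonneg ((b : F) - 1)]
  inv_mem' := by
    intro a ha
    simp only [Set.mem_ofPred_eq] at *
    have h1 : ‖(a : F)‖ = 1 := norm_eq_one_of_norm_sub_one_lt (ha.trans_lt hr1)
    have h : ((a⁻¹ : Fˣ) : F) - 1 = -((a - 1) * (a : F)⁻¹) := by
      rw [Units.val_inv_eq_inv_val]; field_simp; ring
    rw [h, norm_neg, norm_mul, norm_inv, h1]
    simpa using ha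

lemma exists_zpow_mul_of_mem_sup {G : Type*} [CommGroup G] {P x : G} {V : Subgroup G}
    (hx : x ∈ Subgroup.zpowers P ⊔ V) : ∃ k : ℤ, ∃ v ∈ V, x = P ^ k * v := by
  obtain ⟨_, ⟨k, rfl⟩, v, hv, rfl⟩ := Subgroup.mem_sup.1 hx
  exact ⟨k, v, hv, rfl⟩

lemma eq_zero_of_norm_zpow_eq_one {F : Type*} [NormedField F] {P : F} (hP0 : P ≠ 0)
    (hP : ‖P‖ < 1) {k : ℤ} (h : ‖P ^ k‖ = 1) : k = 0 := by
  rw [norm_zpow] at h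
  exact zpow_right_injective₀ (norm_pos_iff.mpr hP0) hP.ne (by simpa using h)

section Ultrametric

variable {F : Type*} [NormedField F] [IsUltrametricDist F]

lemma mem_principalUnits {r : ℝ} {hr : 0 ≤ r} {hr1 : r < 1} {u : Fˣ} :
    u ∈ principalUnits F r hr hr1 ↔ ‖(u : F) - 1‖ ≤ r := Iff.rfl

lemma norm_eq_one_of_mem_principalUnits {r : ℝ} {hr : 0 ≤ r} {hr1 : r < 1} {u : Fˣ}
    (hu : u ∈ principalUnits F r hr hr1) : ‖(u : F)‖ = 1 :=
  norm_eq_one_of_norm_sub_one_lt ((mem_principalUnits.1 hu).trans_lt hr1)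

lemma exists_sq_add_self_eq [CompleteSpace F] {w : F} (hw : ‖w‖ < 1) :
    ∃ y : F, y ^ 2 + y = w ∧ ‖y‖ ≤ ‖w‖ := by
  let s : Set F := Metric.closedBall 0 ‖w‖
  have hs : IsComplete s := Metric.isClosed_closedBall.isComplete
  let f : F → F := fun y ↦ w - y ^ 2
  have hf : Set.MapsTo f s s := by
    intro y hy
    simp only [s, mem_closedBall_zero_iff, f] at *
    rw [sub_eq_add_neg]
    refine (IsUltrametricDist.norm_add_le_max _ _).trans (max_le le_rfl ?_)
    rw [norm_neg, norm_pow]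
    nlinarith [norm_nonneg y]
  have hc : ContractingWith ⟨‖w‖, norm_nonneg w⟩ (hf.restrict f s s) := by
    refine ⟨by exact_mod_cast hw, LipschitzWith.of_dist_le_mul ?_⟩
    rintro ⟨x, hx⟩ ⟨y, hy⟩
    simp only [s, mem_closedBall_zero_iff] at hx hy
    simp only [Subtype.dist_eq, Set.MapsTo.val_restrict_apply, f, dist_eq_norm]
    have h : w - x ^ 2 - (w - y ^ 2) = (-(x + y)) * (x - y) := by ring
    rw [h, norm_mul, norm_neg]
    exact mul_le_mul_of_nonneg_right
      ((IsUltrametricDist.norm_add_le_max _ _).trans (max_le hx hy)) (norm_nonneg _)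
  obtain ⟨y, hys, hy, -⟩ := hc.exists_fixedPoint' hs hf (x := 0) (by simp [s])
    (edist_ne_top _ _)
  refine ⟨y, ?_, by simpa [s] using hys⟩
  have : w - y ^ 2 = y := hy
  linear_combination -this

/-- For `t` with `‖t‖ < 1`, squaring maps the ball of radius `‖4 * t‖` around `1` onto the ball of
radius `‖8 * t‖` around `1`. -/
lemma map_sq_principalUnits [CompleteSpace F] [CharZero F] {t : F} (ht : ‖t‖ < 1)
    (h4 : ‖4 * t‖ < 1) (h8 : ‖8 * t‖ < 1) :
    (principalUnits F ‖4 * t‖ (norm_nonneg _) h4).map (powMonoidHom 2) =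
      principalUnits F ‖8 * t‖ (norm_nonneg _) h8 := by
  have hn2 : ‖(2 : F)‖ ≤ 1 := by exact_mod_cast IsUltrametricDist.norm_natCast_le_one F 2
  have e4 : ‖(4 : F)‖ = ‖(2 : F)‖ * ‖(2 : F)‖ := by rw [← norm_mul]; norm_num
  have e8 : ‖(8 : F)‖ = ‖(2 : F)‖ * ‖(4 : F)‖ := by rw [← norm_mul]; norm_num
  have p2 : 0 < ‖(2 : F)‖ := norm_pos_iff.mpr two_ne_zero
  have pt := norm_nonneg t
  ext u
  simp only [Subgroup.mem_map, mem_principalUnits, powMonoidHom_apply]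
  constructor
  · rintro ⟨v, hv, rfl⟩
    have h : ((v ^ 2 : Fˣ) : F) - 1 = (2 + (v - 1)) * (v - 1) := by push_cast; ring
    rw [h, norm_mul, norm_mul, e8, mul_assoc, ← norm_mul 4]
    refine mul_le_mul ?_ hv (norm_nonneg _) (norm_nonneg _)
    refine (IsUltrametricDist.norm_add_le_max _ _).trans (max_le le_rfl (hv.trans ?_))
    rw [norm_mul, e4]
    have : ‖(2 : F)‖ * ‖t‖ ≤ 1 := by nlinarith
    nlinarith
  · intro hu
    set w : F := (u - 1) / 4 with hw
    have hw' : ‖w‖ ≤ ‖(2 : F)‖ * ‖t‖ := by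
      rw [hw, norm_div, div_le_iff₀ (norm_pos_iff.mpr (by norm_num))]
      rw [norm_mul, e8] at hu
      linarith
    have hw1 : ‖w‖ < 1 := hw'.trans_lt (by nlinarith)
    obtain ⟨y, hy, hyn⟩ := exists_sq_add_self_eq hw1
    have hsq : (1 + 2 * y) ^ 2 = (u : F) := by
      have : (u : F) = 1 + 4 * w := by rw [hw]; field_simp; ring
      rw [this, ← hy]; ring
    have hne : 1 + 2 * y ≠ 0 := by
      intro h
      rw [h] at hsq
      exact u.ne_zero (by rw [← hsq]; simp)
    refine ⟨Units.mk0 _ hne, ?_, Units.ext (by simpa using hsq)⟩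
    simp only [Units.val_mk0, add_sub_cancel_left]
    rw [norm_mul, norm_mul, e4, mul_assoc]
    exact mul_le_mul_of_nonneg_left (hyn.trans hw') (norm_nonneg _)

lemma zpowers_sup_principalUnits_index_ne_zero [ProperSpace F] (P : Fˣ)
    (hP : ‖(P : F)‖ < 1) {r : ℝ} (hr : 0 < r) (hr1 : r < 1) :
    (Subgroup.zpowers P ⊔ principalUnits F r hr.le hr1).index ≠ 0 := by
  have hP0 : 0 < ‖(P : F)‖ := norm_pos_iff.mpr P.ne_zero
  obtain ⟨s, -, hs, hcov⟩ := (isCompact_closedBall (0 : F) 1).finite_cover_balls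
    (e := r * ‖(P : F)‖) (by positivity)
  have hnorm (x : Fˣ) : ∃ k : ℤ, ∃ c : s, ‖(P : F)‖ < ‖((x * P ^ k : Fˣ) : F)‖ ∧
      ‖((x * P ^ k : Fˣ) : F) - c‖ < r * ‖(P : F)‖ := by
    obtain ⟨k, hk1, hk2⟩ := exists_mem_Ioc_zpow (norm_pos_iff.mpr x.ne_zero)
      ((one_lt_inv₀ hP0).2 hP)
    have hk3 : ‖((x * P ^ (k + 1) : Fˣ) : F)‖ = ‖(x : F)‖ * ‖(P : F)‖ ^ (k + 1) := by
      rw [Units.val_mul, Units.val_zpow_eq_zpow_val, norm_mul, norm_zpow]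
    have hle : ‖((x * P ^ (k + 1) : Fˣ) : F)‖ ≤ 1 := by
      rw [hk3]
      rwa [inv_zpow, ← one_div, le_div_iff₀ (by positivity)] at hk2
    have hlt : ‖(P : F)‖ < ‖((x * P ^ (k + 1) : Fˣ) : F)‖ := by
      rw [inv_zpow, ← one_div, div_lt_iff₀ (by positivity)] at hk1
      rw [hk3, zpow_add₀ hP0.ne', zpow_one, ← mul_assoc]
      exact lt_mul_of_one_lt_left hP0 hk1
    have := hcov (mem_closedBall_zero_iff.mpr hle)
    simp only [Set.mem_iUnion, mem_ball_iff_norm] at this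
    obtain ⟨c, hc, hxc⟩ := this
    exact ⟨k + 1, ⟨c, hc⟩, hlt, hxc⟩
  choose k c hk hc using hnorm
  have : Finite s := hs
  suffices Finite (Fˣ ⧸ (Subgroup.zpowers P ⊔ principalUnits F r hr.le hr1)) from
    Subgroup.index_ne_zero_of_finite
  refine Finite.of_injective (fun q ↦ c q.out) fun q q' hqq ↦ ?_
  simp only at hqq
  rw [← q.out_eq', ← q'.out_eq', QuotientGroup.eq]
  generalize q.out = x at *
  generalize q'.out = y at *
  have hv : (x * P ^ k x)⁻¹ * (y * P ^ k y) ∈ principalUnits F r hr.le hr1 := by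
    rw [mem_principalUnits]
    have hx0 : ((x * P ^ k x : Fˣ) : F) ≠ 0 := Units.ne_zero _
    have h : (((x * P ^ k x)⁻¹ * (y * P ^ k y) : Fˣ) : F) - 1 =
        ((((y * P ^ k y : Fˣ) : F) - c y) - (((x * P ^ k x : Fˣ) : F) - c x)) /
          ((x * P ^ k x : Fˣ) : F) := by
      rw [hqq, Units.val_mul (x * P ^ k x)⁻¹, Units.val_inv_eq_inv_val]
      field_simp
      ring
    rw [h, norm_div, div_le_iff₀ (norm_pos_iff.mpr hx0), sub_eq_add_neg]
    refine (IsUltrametricDist.norm_add_le_max _ _).trans ?_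
    rw [norm_neg]
    exact (max_le (hc y).le (hc x).le).trans (mul_le_mul_of_nonneg_left (hk x).le hr.le)
  have h : x⁻¹ * y = P ^ (k x - k y) * ((x * P ^ k x)⁻¹ * (y * P ^ k y)) := by
    rw [zpow_sub, mul_inv]
    calc x⁻¹ * y = (P ^ k x * (P ^ k x)⁻¹) * ((P ^ k y)⁻¹ * P ^ k y) * (x⁻¹ * y) := by simp
      _ = _ := by ac_rfl
  rw [h]
  exact mul_mem (Subgroup.mem_sup_left (Subgroup.zpow_mem_zpowers _ _)) (Subgroup.mem_sup_right hv)

end Ultrametric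

section PadicExtension

variable {p : ℕ} [Fact p.Prime] {F : Type*} [NormedField F] [NormedAlgebra ℚ_[p] F]
  [FiniteDimensional ℚ_[p] F]

lemma isIntegral_padicInt_iff_norm_le_one [Algebra ℤ_[p] F] [IsScalarTower ℤ_[p] ℚ_[p] F]
    (x : F) : IsIntegral ℤ_[p] x ↔ ‖x‖ ≤ 1 := by
  have hx : IsIntegral ℚ_[p] x := Algebra.IsIntegral.isIntegral x
  rw [NormedAlgebra.norm_eq_spectralNorm ℚ_[p], spectralNorm,
    spectralValue_le_one_iff (minpoly.monic hx)]
  constructor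
  · intro h n
    rw [minpoly.isIntegrallyClosed_eq_field_fractions' ℚ_[p] h, Polynomial.coeff_map]
    exact PadicInt.norm_le_one _
  · intro h
    have hl : minpoly ℚ_[p] x ∈ Polynomial.lifts (algebraMap ℤ_[p] ℚ_[p]) := by
      rw [Polynomial.lifts_iff_coeff_lifts]
      exact fun n ↦ ⟨⟨_, h n⟩, rfl⟩
    obtain ⟨q, hq, -, hm⟩ := Polynomial.lifts_and_natDegree_eq_and_monic hl (minpoly.monic hx)
    refine ⟨q, hm, ?_⟩
    have := minpoly.aeval ℚ_[p] x
    rw [← hq, Polynomial.aeval_map_algebraMap] at this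
    exact this

lemma finite_padicInt_quotient {m : ℤ_[p]} (hm : m ≠ 0) :
    Finite (ℤ_[p] ⧸ Ideal.span {m}) := by
  rw [PadicInt.unitCoeff_spec hm, Ideal.span_singleton_mul_left_unit (Units.isUnit _),
    ← PadicInt.ker_toZModPow]
  have : NeZero (p ^ m.valuation) := ⟨pow_ne_zero _ (Fact.out : p.Prime).ne_zero⟩
  exact Finite.of_injective _ (RingHom.kerLift_injective (PadicInt.toZModPow m.valuation))

/-- Reduction modulo `m` of the integers of `F`, in coordinates. -/
lemma exists_reduction {m : ℤ_[p]} (hm : m ≠ 0) :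
    ∃ f : F → (Fin (finrank ℚ_[p] F) → ℤ_[p] ⧸ Ideal.span {m}),
      (∀ y, ∃ a, ‖a‖ ≤ 1 ∧ f a = y) ∧
      (∀ a b, ‖a‖ ≤ 1 → ‖b‖ ≤ 1 → f (a + b) = f a + f b) ∧
      ∀ a, ‖a‖ ≤ 1 → (f a = 0 ↔ ‖a‖ ≤ ‖m‖) := by
  let : Algebra ℤ_[p] F := Algebra.compHom F (algebraMap ℤ_[p] ℚ_[p])
  have : IsScalarTower ℤ_[p] ℚ_[p] F := IsScalarTower.of_algebraMap_eq fun _ ↦ rfl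
  have : CharZero F := charZero_of_injective_algebraMap (algebraMap ℚ_[p] F).injective
  have : Module.IsTorsionFree ℤ_[p] F := Module.IsTorsionFree.trans_faithfulSMul ℤ_[p] ℚ_[p] F
  have h1 := IsIntegralClosure.finite ℤ_[p] ℚ_[p] F (integralClosure ℤ_[p] F)
  have h2 := IsIntegralClosure.module_free ℤ_[p] ℚ_[p] F (integralClosure ℤ_[p] F)
  have h3 := IsIntegralClosure.rank ℤ_[p] ℚ_[p] F (integralClosure ℤ_[p] F)
  let b := Module.finBasisOfFinrankEq ℤ_[p] (integralClosure ℤ_[p] F) h3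
  have hO (a : F) : a ∈ integralClosure ℤ_[p] F ↔ ‖a‖ ≤ 1 :=
    isIntegral_padicInt_iff_norm_le_one a
  have hmF : ‖algebraMap ℤ_[p] F m‖ = ‖m‖ := by
    rw [IsScalarTower.algebraMap_apply ℤ_[p] ℚ_[p] F, norm_algebraMap']
    rfl
  have hmF0 : algebraMap ℤ_[p] F m ≠ 0 := by
    rw [← norm_pos_iff, hmF]
    exact norm_pos_iff.mpr hm
  classical
  let f : F → (Fin (finrank ℚ_[p] F) → ℤ_[p] ⧸ Ideal.span {m}) := fun a ↦
    if h : a ∈ integralClosure ℤ_[p] F then fun i ↦ Ideal.Quotient.mk _ (b.repr ⟨a, h⟩ i) else 0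
  have hf (a : integralClosure ℤ_[p] F) (i) : f a i = Ideal.Quotient.mk _ (b.repr a i) := by
    simp only [f, dif_pos a.2]
  refine ⟨f, fun y ↦ ?_, fun x y hx hy ↦ ?_, fun a ha ↦ ?_⟩
  · choose g hg using fun i ↦ Ideal.Quotient.mk_surjective (y i)
    refine ⟨b.equivFun.symm g, (hO _).1 (b.equivFun.symm g).2, ?_⟩
    ext i
    rw [hf, ← hg i, ← b.equivFun_apply, LinearEquiv.apply_symm_apply]
  · rw [← hO] at hx hy
    lift x to integralClosure ℤ_[p] F using hx
    lift y to integralClosure ℤ_[p] F using hy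
    ext i
    rw [Pi.add_apply, hf, hf, ← map_add]
    simpa using hf (x + y) i
  · rw [← hO] at ha
    lift a to integralClosure ℤ_[p] F using ha
    constructor
    · intro h
      have h' (i) : ∃ c, b.repr a i = m * c := by
        have := congrFun h i
        rw [hf, Pi.zero_apply, Ideal.Quotient.eq_zero_iff_mem, Ideal.mem_span_singleton] at this
        exact this
      choose c hc using h'
      have hac : a = m • b.equivFun.symm c := by
        apply b.equivFun.injective
        ext i
        rw [map_smul, LinearEquiv.apply_symm_apply, b.equivFun_apply, hc, Pi.smul_apply,
          smul_eq_mul]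
      have : (a : F) = algebraMap ℤ_[p] F m * (b.equivFun.symm c : F) := by
        rw [← Algebra.smul_def, hac]
        rfl
      rw [this, norm_mul, hmF]
      exact mul_le_of_le_one_right (norm_nonneg _) ((hO _).1 (b.equivFun.symm c).2)
    · intro h
      have hq : (a : F) / algebraMap ℤ_[p] F m ∈ integralClosure ℤ_[p] F := by
        rw [hO, norm_div, hmF]
        exact div_le_one_of_le₀ h (norm_nonneg _)
      have hac : a = m • (⟨_, hq⟩ : integralClosure ℤ_[p] F) := by
        ext
        change (a : F) = m • ((a : F) / algebraMap ℤ_[p] F m)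
        rw [Algebra.smul_def, mul_div_cancel₀ _ hmF0]
      ext i
      rw [hf, hac, Pi.zero_apply, Ideal.Quotient.eq_zero_iff_mem, Ideal.mem_span_singleton, map_smul,
        Finsupp.smul_apply, smul_eq_mul]
      exact dvd_mul_right _ _

lemma relIndex_principalUnits {t : F} (ht0 : t ≠ 0) (ht : ‖t‖ < 1) [IsUltrametricDist F]
    (h4 : ‖4 * t‖ < 1) (h8 : ‖8 * t‖ < 1) :
    (principalUnits F ‖8 * t‖ (norm_nonneg _) h8).relIndex
      (principalUnits F ‖4 * t‖ (norm_nonneg _) h4) =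
      Nat.card (ℤ_[p] ⧸ Ideal.span {(2 : ℤ_[p])}) ^ finrank ℚ_[p] F := by
  have : CharZero F := charZero_of_injective_algebraMap (algebraMap ℚ_[p] F).injective
  obtain ⟨f, hsurj, hadd, hker⟩ := exists_reduction (F := F) (m := (2 : ℤ_[p])) two_ne_zero
  have hn2 : ‖(2 : ℤ_[p])‖ = ‖(2 : F)‖ := by
    have : (2 : F) = algebraMap ℚ_[p] F (2 : ℚ_[p]) := (map_ofNat _ 2).symm
    rw [this, norm_algebraMap']
    exact_mod_cast PadicInt.norm_def (z := (2 : ℤ_[p]))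
  have h4t : 4 * t ≠ 0 := mul_ne_zero (by norm_num) ht0
  have h4p : 0 < ‖4 * t‖ := norm_pos_iff.mpr h4t
  have hint (u : Fˣ) (hu : u ∈ principalUnits F ‖4 * t‖ (norm_nonneg _) h4) :
      ‖((u : F) - 1) / (4 * t)‖ ≤ 1 := by
    rw [norm_div]
    exact div_le_one_of_le₀ hu (norm_nonneg _)
  have h4le : ‖4 * t‖ ≤ ‖(2 : F)‖ := by
    have : 4 * t = 2 * (2 * t) := by ring
    rw [this, norm_mul, norm_mul]
    have := IsUltrametricDist.norm_natCast_le_one F 2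
    have := norm_nonneg t
    refine mul_le_of_le_one_right (norm_nonneg _) ?_
    push_cast at *
    nlinarith
  have hzero {a : F} (ha : ‖a‖ ≤ ‖(2 : F)‖) : f a = 0 :=
    (hker a (ha.trans (by exact_mod_cast IsUltrametricDist.norm_natCast_le_one F 2))).2
      (hn2 ▸ ha)
  let φ : principalUnits F ‖4 * t‖ (norm_nonneg _) h4 →*
      Multiplicative (Fin (finrank ℚ_[p] F) → ℤ_[p] ⧸ Ideal.span {(2 : ℤ_[p])}) :=
    MonoidHom.mk' (fun u ↦ .ofAdd (f (((u : Fˣ) - 1) / (4 * t)))) (by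
      rintro ⟨u, hu⟩ ⟨v, hv⟩
      rw [← ofAdd_add]
      congr 1
      have hu' := hint u hu
      have hv' := hint v hv
      have h : (((u * v : Fˣ) : F) - 1) / (4 * t) = (((u : F) - 1) / (4 * t) +
          ((v : F) - 1) / (4 * t)) +
          (4 * t) * ((((u : F) - 1) / (4 * t)) * (((v : F) - 1) / (4 * t))) := by
        push_cast
        field_simp
        ring
      have hsm : ‖(4 * t) * ((((u : F) - 1) / (4 * t)) * (((v : F) - 1) / (4 * t)))‖ ≤
          ‖(2 : F)‖ := by
        rw [norm_mul (4 * t), norm_mul (((u : F) - 1) / (4 * t))]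
        exact (mul_le_of_le_one_right h4p.le (mul_le_one₀ hu' (norm_nonneg _) hv')).trans h4le
      change f ((((u * v : Fˣ) : F) - 1) / (4 * t)) = _
      rw [h, hadd _ _ ((IsUltrametricDist.norm_add_le_max _ _).trans (max_le hu' hv'))
        (hsm.trans (by exact_mod_cast IsUltrametricDist.norm_natCast_le_one F 2)),
        hzero hsm, add_zero, hadd _ _ hu' hv'])
  have hφ : Function.Surjective φ := by
    intro y
    obtain ⟨a, ha, hy⟩ := hsurj y.toAdd
    have hle : ‖4 * t * a‖ ≤ ‖4 * t‖ := by
      rw [norm_mul]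
      exact mul_le_of_le_one_right h4p.le ha
    have hne : 1 + 4 * t * a ≠ 0 := by
      intro h
      have : 4 * t * a = -1 := by linear_combination h
      rw [this, norm_neg, norm_one] at hle
      linarith
    refine ⟨⟨Units.mk0 _ hne, ?_⟩, ?_⟩
    · rw [mem_principalUnits]
      simpa using hle
    · change Multiplicative.ofAdd (f ((1 + 4 * t * a - 1) / (4 * t))) = y
      rw [add_sub_cancel_left, mul_div_cancel_left₀ _ h4t, hy]
      rfl
  have hk : (principalUnits F ‖8 * t‖ (norm_nonneg _) h8).subgroupOf
      (principalUnits F ‖4 * t‖ (norm_nonneg _) h4) = φ.ker := by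
    ext ⟨u, hu⟩
    rw [Subgroup.mem_subgroupOf, mem_principalUnits, MonoidHom.mem_ker]
    change _ ↔ f (((u : F) - 1) / (4 * t)) = 0
    have e8 : 8 * t = 2 * (4 * t) := by ring
    rw [hker _ (hint u hu), hn2, norm_div, div_le_iff₀ h4p, e8, norm_mul 2]
  rw [Subgroup.relIndex, hk, Subgroup.index_ker, MonoidHom.range_eq_top.2 hφ, Subgroup.card_top,
    Nat.card_congr Multiplicative.toAdd, Nat.card_fun, Nat.card_fin]

lemma index_squares_of_normedAlgebra : (powMonoidHom 2 : Fˣ →* Fˣ).range.index =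
      4 * Nat.card (ℤ_[p] ⧸ Ideal.span {(2 : ℤ_[p])}) ^ finrank ℚ_[p] F := by
  have : CharZero F := charZero_of_injective_algebraMap (algebraMap ℚ_[p] F).injective
  have : IsUltrametricDist F := IsUltrametricDist.of_normedAlgebra ℚ_[p]
  have : CompleteSpace F := FiniteDimensional.complete ℚ_[p] F
  have : ProperSpace F := FiniteDimensional.proper ℚ_[p] F
  have hnat (n : ℕ) : ‖(n : F)‖ ≤ 1 := IsUltrametricDist.norm_natCast_le_one F n
  have hp0 : (p : F) ≠ 0 := Nat.cast_ne_zero.mpr (Fact.out : p.Prime).ne_zero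
  have hp1 : ‖(p : F)‖ < 1 := by
    rw [← map_natCast (algebraMap ℚ_[p] F), norm_algebraMap']
    exact Padic.norm_p_lt_one
  have h4 : ‖4 * (p : F)‖ < 1 := by
    rw [norm_mul]
    exact (mul_le_of_le_one_left (norm_nonneg _) (by exact_mod_cast hnat 4)).trans_lt hp1
  have h8 : ‖8 * (p : F)‖ < 1 := by
    rw [norm_mul]
    exact (mul_le_of_le_one_left (norm_nonneg _) (by exact_mod_cast hnat 8)).trans_lt hp1
  have h4pos : 0 < ‖4 * (p : F)‖ := norm_pos_iff.mpr (mul_ne_zero (by norm_num) hp0)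
  have h42 : ‖4 * (p : F)‖ < ‖(2 : F)‖ := by
    have : 4 * (p : F) = 2 * (2 * p) := by ring
    rw [this, norm_mul]
    refine mul_lt_of_lt_one_right (norm_pos_iff.mpr two_ne_zero) ?_
    rw [norm_mul]
    exact (mul_le_of_le_one_left (norm_nonneg _) (by exact_mod_cast hnat 2)).trans_lt hp1
  let P : Fˣ := Units.mk0 p hp0
  set V := principalUnits F ‖4 * (p : F)‖ (norm_nonneg _) h4 with hV
  set W := principalUnits F ‖8 * (p : F)‖ (norm_nonneg _) h8
  set sq : Fˣ →* Fˣ := powMonoidHom 2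
  have hVW : V.map sq = W := map_sq_principalUnits hp1 h4 h8
  have hWV : W ≤ V := by
    rw [← hVW]
    rintro _ ⟨v, hv, rfl⟩
    exact pow_mem hv 2
  have hzpow {k : ℤ} {v w : Fˣ} (hv : v ∈ V) (hw : w ∈ V) (h : P ^ k * v = w) : k = 0 := by
    refine eq_zero_of_norm_zpow_eq_one hp0 hp1 ?_
    have h' := congrArg (fun u : Fˣ ↦ ‖(u : F)‖) h
    simpa [norm_eq_one_of_mem_principalUnits hv, norm_eq_one_of_mem_principalUnits hw, P] using h'
  set B := Subgroup.zpowers P ⊔ V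
  have hB : B.index ≠ 0 := zpowers_sup_principalUnits_index_ne_zero P hp1 h4pos h4
  have hneg : (-1 : Fˣ) ∉ B := by
    intro h
    obtain ⟨k, v, hv, hk⟩ := exists_zpow_mul_of_mem_sup h
    have hk0 : k = 0 := by
      refine eq_zero_of_norm_zpow_eq_one hp0 hp1 ?_
      have h' := congrArg (fun u : Fˣ ↦ ‖(u : F)‖) hk
      simpa [norm_eq_one_of_mem_principalUnits hv, P] using h'.symm
    rw [hk0, zpow_zero, one_mul] at hk
    rw [← hk, hV, mem_principalUnits] at hv
    have : ((-1 : Fˣ) : F) - 1 = -2 := by push_cast; norm_num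
    rw [this, norm_neg] at hv
    linarith
  have hker : B.relIndex sq.ker = 2 := by
    rw [Subgroup.relIndex_eq_two_iff]
    refine ⟨-1, by simp [sq, MonoidHom.mem_ker], fun b hb ↦ ?_⟩
    have hb' : b ^ 2 = 1 := hb
    have hb1 : b = 1 ∨ b = -1 := by
      rw [Units.ext_iff, Units.ext_iff]
      exact sq_eq_one_iff.1 (by simpa using congrArg Units.val hb')
    rcases hb1 with rfl | rfl
    · exact Or.inr ⟨one_mem B, by rwa [one_mul]⟩
    · exact Or.inl ⟨by simp, hneg⟩
  have hBmap : B.map sq = Subgroup.zpowers (P ^ 2) ⊔ W := by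
    rw [Subgroup.map_sup, hVW, MonoidHom.map_zpowers]
    rfl
  set C := Subgroup.zpowers (P ^ 2) ⊔ V
  have hP2 : Subgroup.zpowers (P ^ 2) ≤ Subgroup.zpowers P := by
    rw [Subgroup.zpowers_le]
    exact pow_mem (Subgroup.mem_zpowers P) 2
  have hCB : C ≤ B := sup_le_sup_right hP2 V
  have hDC : Subgroup.zpowers (P ^ 2) ⊔ W ≤ C := sup_le_sup_left hWV _
  have hD : (Subgroup.zpowers (P ^ 2) ⊔ W).relIndex C = W.relIndex V := by
    have : C = (Subgroup.zpowers (P ^ 2) ⊔ W) ⊔ V := by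
      rw [sup_assoc, sup_eq_right.2 hWV]
    rw [this, Subgroup.relIndex_sup_left, ← Subgroup.inf_relIndex_right,
      ← Subgroup.inf_relIndex_right W]
    congr 1
    refine le_antisymm (le_inf ?_ inf_le_right) (inf_le_inf_right _ le_sup_right)
    rintro x ⟨hx, hxV⟩
    obtain ⟨k, w, hw, rfl⟩ := exists_zpow_mul_of_mem_sup hx
    have : (P ^ 2) ^ k = P ^ (2 * k) := by rw [zpow_mul]; rfl
    have h0 : 2 * k = 0 := hzpow (hWV hw) hxV (by rw [this])
    rw [this, h0]
    simpa using hw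
  have hC (k : ℤ) : P ^ k ∈ C ↔ Even k := by
    constructor
    · intro h
      obtain ⟨l, v, hv, hl⟩ := exists_zpow_mul_of_mem_sup h
      have h0 : k - 2 * l = 0 := by
        refine hzpow (one_mem V) hv ?_
        rw [zpow_sub, hl, zpow_mul, mul_one, mul_comm _ v, mul_assoc]
        simp
      exact ⟨l, by linarith⟩
    · rintro ⟨l, rfl⟩
      refine Subgroup.mem_sup_left ⟨l, ?_⟩
      simp only [← zpow_natCast, ← zpow_mul]
      congr 1
      push_cast
      ring
  have hCidx : C.relIndex B = 2 := by
    have : B = C ⊔ Subgroup.zpowers P := by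
      rw [sup_right_comm, sup_eq_right.2 hP2]
    rw [this, Subgroup.relIndex_sup_left, Subgroup.relIndex_eq_two_iff]
    refine ⟨P, Subgroup.mem_zpowers P, ?_⟩
    rintro _ ⟨k, rfl⟩
    simp only
    rw [← zpow_add_one, hC, hC, Int.even_add_one]
    by_cases hk : Even k
    · exact Or.inr ⟨hk, not_not_intro hk⟩
    · exact Or.inl ⟨hk, hk⟩
  have h1 := Subgroup.index_map B sq
  have h2 := Subgroup.relIndex_mul_index (H := B) (K := B ⊔ sq.ker) le_sup_left
  rw [Subgroup.relIndex_sup_left, hker] at h2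
  have h3 := Subgroup.relIndex_mul_index (hDC.trans hCB)
  rw [← Subgroup.relIndex_mul_relIndex _ _ _ hDC hCB, hD, hCidx,
    relIndex_principalUnits (p := p) hp0 hp1 h4 h8, ← hBmap, h1, ← h2] at h3
  have h5 : (B ⊔ sq.ker).index ≠ 0 := by
    intro h
    rw [h] at h2
    exact hB h2.symm
  apply Nat.eq_of_mul_eq_mul_left (Nat.pos_of_ne_zero h5)
  rw [← h3]
  ring

end PadicExtension

/-- The number of square classes of a finite extension of `ℚ_[p]`. -/
lemma index_squares (p : ℕ) [Fact p.Prime] (F : Type*) [Field F] [Algebra ℚ_[p] F]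
    [FiniteDimensional ℚ_[p] F] : (powMonoidHom 2 : Fˣ →* Fˣ).range.index =
      4 * Nat.card (ℤ_[p] ⧸ Ideal.span {(2 : ℤ_[p])}) ^ finrank ℚ_[p] F := by
  let : NormedField F := spectralNorm.normedField ℚ_[p] F
  let : NormedAlgebra ℚ_[p] F := spectralNorm.normedAlgebra ℚ_[p] F
  exact index_squares_of_normedAlgebra

section Quadratic

variable {K L : Type*} [Field K] [Field L] [Algebra K L] {d : K} {s : L}

lemma linearIndependent_one_sqrt (hd : ¬ IsSquare d) (hs : s ^ 2 = algebraMap K L d) :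
    LinearIndependent K ![(1 : L), s] := by
  rw [LinearIndependent.pair_iff' one_ne_zero]
  intro a ha
  rw [Algebra.smul_def, mul_one] at ha
  refine hd ⟨a, (algebraMap K L).injective ?_⟩
  rw [← hs, ← ha, map_mul, sq]

lemma eq_zero_of_add_mul_sqrt_eq_zero (hd : ¬ IsSquare d) (hs : s ^ 2 = algebraMap K L d) {a b : K}
    (h : algebraMap K L a + algebraMap K L b * s = 0) : a = 0 ∧ b = 0 := by
  have hli := linearIndependent_one_sqrt hd hs
  refine LinearIndependent.pair_iff.1 hli a b ?_
  rw [Algebra.smul_def, Algebra.smul_def, mul_one, h]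

lemma exists_eq_add_mul_sqrt (hd : ¬ IsSquare d) (hL : finrank K L = 2)
    (hs : s ^ 2 = algebraMap K L d) (x : L) :
    ∃ a b : K, x = algebraMap K L a + algebraMap K L b * s := by
  have hli := linearIndependent_one_sqrt hd hs
  let B := basisOfLinearIndependentOfCardEqFinrank hli (by simp [hL])
  refine ⟨B.repr x 0, B.repr x 1, ?_⟩
  have := B.sum_repr x
  rw [Fin.sum_univ_two] at this
  simpa [B, Algebra.smul_def] using this.symm

lemma norm_add_mul_sqrt (hd : ¬ IsSquare d) (hL : finrank K L = 2)
    (hs : s ^ 2 = algebraMap K L d) (a b : K) :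
    Algebra.norm K (algebraMap K L a + algebraMap K L b * s) = a ^ 2 - d * b ^ 2 := by
  have hli := linearIndependent_one_sqrt hd hs
  let B := basisOfLinearIndependentOfCardEqFinrank hli (by simp [hL])
  have hB0 : B 0 = 1 := by simp [B]
  have hB1 : B 1 = s := by simp [B]
  have h0 : (algebraMap K L a + algebraMap K L b * s) * B 0 = a • B 0 + b • B 1 := by
    rw [hB0, hB1, Algebra.smul_def, Algebra.smul_def]
    ring
  have h1 : (algebraMap K L a + algebraMap K L b * s) * B 1 = (d * b) • B 0 + a • B 1 := by
    rw [hB0, hB1, Algebra.smul_def, Algebra.smul_def, map_mul, ← hs]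
    ring
  rw [Algebra.norm_eq_matrix_det B, Matrix.det_fin_two]
  simp only [Algebra.leftMulMatrix_eq_repr_mul, h0, h1]
  simp
  ring

lemma mem_normGroup_iff (hd : ¬ IsSquare d) (hL : finrank K L = 2)
    (hs : s ^ 2 = algebraMap K L d) (x : K) :
    x ∈ normGroup K L ↔ x ≠ 0 ∧ ∃ a b : K, x = a ^ 2 - d * b ^ 2 := by
  have : FiniteDimensional K L := FiniteDimensional.of_finrank_pos (by omega)
  constructor
  · rintro ⟨t, ht, rfl⟩
    refine ⟨Algebra.norm_ne_zero_iff.mpr ht, ?_⟩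
    obtain ⟨a, b, rfl⟩ := exists_eq_add_mul_sqrt hd hL hs t
    exact ⟨a, b, norm_add_mul_sqrt hd hL hs a b⟩
  · rintro ⟨hx, a, b, hab⟩
    refine ⟨algebraMap K L a + algebraMap K L b * s, ?_, ?_⟩
    · rw [← Algebra.norm_ne_zero_iff (R := K), norm_add_mul_sqrt hd hL hs, ← hab]
      exact hx
    · rw [norm_add_mul_sqrt hd hL hs, hab]

end Quadratic

/-- The group of nonzero values of the norm form `a ^ 2 - d * b ^ 2`. -/
def quadNorms {K : Type*} [Field K] (d : K) : Subgroup Kˣ where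
  carrier := {u | ∃ a b : K, (u : K) = a ^ 2 - d * b ^ 2}
  one_mem' := ⟨1, 0, by simp⟩
  mul_mem' := by
    rintro u v ⟨a, b, hu⟩ ⟨a', b', hv⟩
    exact ⟨a * a' + d * b * b', a * b' + b * a', by rw [Units.val_mul, hu, hv]; ring⟩
  inv_mem' := by
    rintro u ⟨a, b, hu⟩
    refine ⟨a / u, b / u, ?_⟩
    have h : (a / (u : K)) ^ 2 - d * (b / (u : K)) ^ 2 = (a ^ 2 - d * b ^ 2) / (u : K) ^ 2 := by
      ring
    rw [h, ← hu, Units.val_inv_eq_inv_val]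
    field_simp

section QuadNorms

variable {K : Type*} [Field K]

lemma mem_quadNorms {d : K} {u : Kˣ} :
    u ∈ quadNorms d ↔ ∃ a b : K, (u : K) = a ^ 2 - d * b ^ 2 := Iff.rfl

lemma mem_quadNorms_of_isSquare (d : K) {c : Kˣ} (hc : IsSquare (c : K)) : c ∈ quadNorms d := by
  obtain ⟨a, ha⟩ := hc
  exact ⟨a, 0, by rw [ha]; ring⟩

lemma mem_quadNorms_symm {c d : Kˣ} (hc : ¬ IsSquare (c : K)) (h : c ∈ quadNorms (d : K)) :
    d ∈ quadNorms (c : K) := by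
  obtain ⟨a, b, hab⟩ := h
  have hb : b ≠ 0 := by
    rintro rfl
    exact hc ⟨a, by rw [hab]; ring⟩
  refine ⟨a / b, 1 / b, ?_⟩
  rw [hab]
  field_simp
  ring

lemma isSquare_algebraMap_iff [NeZero (2 : K)] {L : Type*} [Field L] [Algebra K L] {d : K} {s : L}
    (hd : ¬ IsSquare d) (hL : finrank K L = 2) (hs : s ^ 2 = algebraMap K L d) (x : K) :
    IsSquare (algebraMap K L x) ↔ IsSquare x ∨ IsSquare (d * x) := by
  have hs0 : s ≠ 0 := by
    rintro rfl
    refine hd ⟨0, (algebraMap K L).injective ?_⟩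
    rw [← hs]
    simp
  constructor
  · rintro ⟨z, hz⟩
    obtain ⟨a, b, rfl⟩ := exists_eq_add_mul_sqrt hd hL hs z
    have h : algebraMap K L (a ^ 2 + d * b ^ 2 - x) + algebraMap K L (2 * a * b) * s = 0 := by
      simp only [map_add, map_sub, map_mul, map_pow, ← hs, hz, map_ofNat]
      ring
    have hli := eq_zero_of_add_mul_sqrt_eq_zero hd hs h
    have hab : a = 0 ∨ b = 0 := by simpa [NeZero.ne] using hli.2
    rcases hab with rfl | rfl
    · exact Or.inr ⟨d * b, by linear_combination (-d) * hli.1⟩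
    · exact Or.inl ⟨a, by linear_combination -hli.1⟩
  · rintro (⟨y, rfl⟩ | ⟨y, hy⟩)
    · exact ⟨algebraMap K L y, map_mul _ _ _⟩
    · refine ⟨algebraMap K L y / s, ?_⟩
      have := congrArg (algebraMap K L) hy
      rw [map_mul, map_mul, ← hs] at this
      field_simp
      linear_combination this

lemma mem_range_sq_iff {F : Type*} [Field F] {u : Fˣ} :
    u ∈ (powMonoidHom 2 : Fˣ →* Fˣ).range ↔ IsSquare (u : F) := by
  constructor
  · rintro ⟨v, rfl⟩
    exact ⟨v, by simp [sq]⟩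
  · rintro ⟨v, hv⟩
    have hv0 : v ≠ 0 := by
      rintro rfl
      exact u.ne_zero (by simp [hv])
    exact ⟨Units.mk0 v hv0, Units.ext (by simp [hv, sq])⟩

/-- A consequence of Hilbert 90 for quadratic extensions: an element whose norm is a square is,
up to squares, in the base field. -/
lemma exists_mul_sq_of_norm_eq_sq [NeZero (2 : K)] {L : Type*} [Field L] [Algebra K L] {d : K}
    {s : L} (hd : ¬ IsSquare d) (hL : finrank K L = 2) (hs : s ^ 2 = algebraMap K L d) {z : L}
    {k : K} (hk : k ≠ 0) (hz : Algebra.norm K z = k ^ 2) :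
    ∃ c : K, ∃ w : L, c ≠ 0 ∧ w ≠ 0 ∧ z = algebraMap K L c * w ^ 2 := by
  have hd0 : d ≠ 0 := by
    rintro rfl
    exact hd ⟨0, by simp⟩
  have hs0 : s ≠ 0 := by
    rintro rfl
    exact hd0 ((algebraMap K L).injective (by rw [← hs]; simp))
  obtain ⟨a, b, rfl⟩ := exists_eq_add_mul_sqrt hd hL hs z
  rw [norm_add_mul_sqrt hd hL hs] at hz
  by_cases hak : a + k = 0
  · have hb : b = 0 := by
      have : d * b ^ 2 = 0 := by linear_combination (a - k) * hak - hz
      simpa [hd0] using this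
    have ha : a ≠ 0 := by
      rintro rfl
      exact hk (by simpa using hak)
    exact ⟨a, 1, ha, one_ne_zero, by simp [hb]⟩
  · have h2 : (2 : K) ≠ 0 := NeZero.ne 2
    have hc : 2 * (a + k) ≠ 0 := mul_ne_zero h2 hak
    have hcL : algebraMap K L (2 * (a + k)) ≠ 0 := (map_ne_zero (algebraMap K L)).2 hc
    have key : algebraMap K L (2 * (a + k)) * (algebraMap K L a + algebraMap K L b * s) =
        (algebraMap K L (a + k) + algebraMap K L b * s) ^ 2 := by
      have hz' := congrArg (algebraMap K L) hz
      simp only [map_add, map_sub, map_mul, map_pow, map_ofNat, ← hs] at hz' ⊢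
      linear_combination hz'
    refine ⟨(2 * (a + k))⁻¹, algebraMap K L (a + k) + algebraMap K L b * s, inv_ne_zero hc,
      ?_, ?_⟩
    · exact fun h ↦ hak (eq_zero_of_add_mul_sqrt_eq_zero hd hs h).1
    · rw [← key, map_inv₀, inv_mul_cancel_left₀ hcL]

/-- The norm index of a quadratic extension in terms of the numbers of square classes. -/
lemma index_squares_mul_index_squares [NeZero (2 : K)] {L : Type*} [Field L] [Algebra K L] {d : K}
    {s : L} (hd : ¬ IsSquare d) (hL : finrank K L = 2) (hs : s ^ 2 = algebraMap K L d) :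
    (powMonoidHom 2 : Kˣ →* Kˣ).range.index * (powMonoidHom 2 : Kˣ →* Kˣ).range.index =
      2 * (powMonoidHom 2 : Lˣ →* Lˣ).range.index * (quadNorms d).index := by
  have hd0 : d ≠ 0 := by
    rintro rfl
    exact hd ⟨0, by simp⟩
  have : FiniteDimensional K L := FiniteDimensional.of_finrank_pos (by omega)
  set SK := (powMonoidHom 2 : Kˣ →* Kˣ).range with hSK
  set SL := (powMonoidHom 2 : Lˣ →* Lˣ).range with hSL
  let f : Lˣ →* Kˣ := Units.map (Algebra.norm K)
  let g : Kˣ →* Lˣ := Units.map (algebraMap K L)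
  have hf : f.range = quadNorms d := by
    ext u
    constructor
    · rintro ⟨z, rfl⟩
      obtain ⟨a, b, hab⟩ := exists_eq_add_mul_sqrt hd hL hs (z : L)
      exact ⟨a, b, by simp [f, hab, norm_add_mul_sqrt hd hL hs]⟩
    · rintro ⟨a, b, hab⟩
      have hn : Algebra.norm K (algebraMap K L a + algebraMap K L b * s) = u := by
        rw [norm_add_mul_sqrt hd hL hs, hab]
      have h0 : algebraMap K L a + algebraMap K L b * s ≠ 0 := by
        rw [← Algebra.norm_ne_zero_iff (R := K), hn]
        exact u.ne_zero
      exact ⟨Units.mk0 _ h0, Units.ext hn⟩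
  have hSKf : SK ≤ f.range := by
    intro u hu
    rw [hf]
    exact mem_quadNorms_of_isSquare d (mem_range_sq_iff.1 hu)
  have hM : SK.comap f = SL ⊔ g.range := by
    apply le_antisymm
    · intro z hz
      rw [Subgroup.mem_comap, hSK] at hz
      obtain ⟨k, hk⟩ := hz
      obtain ⟨c, w, hc, hw, h⟩ := exists_mul_sq_of_norm_eq_sq hd hL hs k.ne_zero
        (z := (z : L)) (by simpa [f] using (congrArg Units.val hk).symm)
      have : z = Units.mk0 w hw ^ 2 * g (Units.mk0 c hc) := by
        ext
        simp [g, h, mul_comm]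
      rw [this]
      exact mul_mem (Subgroup.mem_sup_left ⟨_, rfl⟩) (Subgroup.mem_sup_right ⟨_, rfl⟩)
    · refine sup_le ?_ ?_
      · rintro _ ⟨z, rfl⟩
        exact ⟨f z, by simp⟩
      · rintro _ ⟨u, rfl⟩
        refine ⟨u, Units.ext ?_⟩
        simp [f, g, Algebra.norm_algebraMap, hL]
  have hg : SK ≤ SL.comap g := by
    rintro _ ⟨u, rfl⟩
    exact ⟨g u, by simp⟩
  have hg2 : SK.relIndex (SL.comap g) = 2 := by
    have hmem (u : Kˣ) : u ∈ SL.comap g ↔ IsSquare (u : K) ∨ IsSquare (d * u) := by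
      rw [Subgroup.mem_comap, hSL, mem_range_sq_iff, ← isSquare_algebraMap_iff hd hL hs]
      rfl
    rw [Subgroup.relIndex_eq_two_iff]
    refine ⟨Units.mk0 d hd0, (hmem _).2 (Or.inr ⟨d, rfl⟩), fun b hb ↦ ?_⟩
    rw [hSK, mem_range_sq_iff, mem_range_sq_iff, Units.val_mul, Units.val_mk0, mul_comm]
    have hnot : ¬ (IsSquare (b : K) ∧ IsSquare (d * b)) := by
      rintro ⟨h1, h2⟩
      refine hd ?_
      have := h2.div h1
      rwa [mul_div_cancel_right₀ _ b.ne_zero] at this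
    rcases (hmem b).1 hb with h | h
    · exact Or.inr ⟨h, fun h' ↦ hnot ⟨h, h'⟩⟩
    · exact Or.inl ⟨h, fun h' ↦ hnot ⟨h', h⟩⟩
  have e1 := Subgroup.relIndex_mul_index hg
  have e2 := Subgroup.relIndex_mul_index hSKf
  have e3 := Subgroup.relIndex_mul_index (H := SL) (K := SL ⊔ g.range) le_sup_left
  rw [Subgroup.relIndex_sup_left, ← hM] at e3
  have e4 := Subgroup.index_comap SL g
  have e5 := Subgroup.index_comap SK f
  rw [hg2, e4] at e1
  rw [e5] at e3
  rw [← hf, ← e3]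
  nth_rewrite 1 [← e1]
  rw [← e2]
  ring

end QuadNorms

/-- The norm group of a quadratic extension of a `p`-adic field has index two. -/
lemma index_quadNorms (p : ℕ) [Fact p.Prime] {K : Type*} [Field K] [Algebra ℚ_[p] K]
    [FiniteDimensional ℚ_[p] K] {d : K} (hd : ¬ IsSquare d) : (quadNorms d).index = 2 := by
  have : CharZero K := charZero_of_injective_algebraMap (algebraMap ℚ_[p] K).injective
  have hirr : Irreducible (Polynomial.X ^ 2 - Polynomial.C d) := by
    rw [X_pow_sub_C_irreducible_iff_of_prime Nat.prime_two]
    rintro b rfl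
    exact hd ⟨b, sq b⟩
  have : Fact (Irreducible (Polynomial.X ^ 2 - Polynomial.C d)) := ⟨hirr⟩
  let L := AdjoinRoot (Polynomial.X ^ 2 - Polynomial.C d)
  let s : L := AdjoinRoot.root _
  have hL : finrank K L = 2 := by
    rw [(AdjoinRoot.powerBasis hirr.ne_zero).finrank, AdjoinRoot.powerBasis_dim,
      Polynomial.natDegree_X_pow_sub_C]
  have hs : s ^ 2 = algebraMap K L d := by
    have := AdjoinRoot.eval₂_root (Polynomial.X ^ 2 - Polynomial.C d)
    rw [Polynomial.eval₂_sub, Polynomial.eval₂_pow, Polynomial.eval₂_X, Polynomial.eval₂_C,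
      sub_eq_zero] at this
    exact this
  have : FiniteDimensional K L := FiniteDimensional.of_finrank_pos (by omega)
  have : FiniteDimensional ℚ_[p] L := FiniteDimensional.trans ℚ_[p] K L
  have h := index_squares_mul_index_squares hd hL hs
  rw [index_squares p K, index_squares p L, ← finrank_mul_finrank ℚ_[p] K L, hL] at h
  have := finite_padicInt_quotient (p := p) two_ne_zero
  set c := Nat.card (ℤ_[p] ⧸ Ideal.span {(2 : ℤ_[p])}) with hc
  have hc0 : c ≠ 0 := Nat.card_ne_zero.2 ⟨inferInstance, this⟩
  rw [pow_mul] at h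
  have hpos : 0 < 8 * (c ^ finrank ℚ_[p] K) ^ 2 := by positivity
  apply Nat.eq_of_mul_eq_mul_left hpos
  linarith

/-- The norm groups of two distinct quadratic extensions generate `Kˣ`. -/
lemma quadNorms_sup_quadNorms_mul (p : ℕ) [Fact p.Prime] {K : Type*} [Field K] [Algebra ℚ_[p] K]
    [FiniteDimensional ℚ_[p] K] {d e : K} (hd : ¬ IsSquare d) (he : ¬ IsSquare e)
    (hde : ¬ IsSquare (d * e)) : quadNorms d ⊔ quadNorms (d * e) = ⊤ := by
  have hd0 : d ≠ 0 := by
    rintro rfl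
    exact hd ⟨0, by simp⟩
  have he0 : e ≠ 0 := by
    rintro rfl
    exact he ⟨0, by simp⟩
  have hmul {c : K} (hc : ¬ IsSquare c) (u v : Kˣ) :
      u * v ∈ quadNorms c ↔ (u ∈ quadNorms c ↔ v ∈ quadNorms c) :=
    Subgroup.mul_mem_iff_of_index_two (index_quadNorms p hc)
  by_contra hne
  have hidx : (quadNorms d ⊔ quadNorms (d * e)).index ≠ 1 := mt Subgroup.index_eq_one.1 hne
  have heq {H : Subgroup Kˣ} (hH : H.index = 2) (hle : H ≤ quadNorms d ⊔ quadNorms (d * e)) :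
      quadNorms d ⊔ quadNorms (d * e) = H := by
    have h := Subgroup.relIndex_mul_index hle
    rw [hH] at h
    have h2 := (Nat.dvd_prime Nat.prime_two).1 (Dvd.intro_left _ h)
    rw [h2.resolve_left hidx] at h
    exact le_antisymm (Subgroup.relIndex_eq_one.1 (by omega)) hle
  have hEq : quadNorms d = quadNorms (d * e) :=
    (heq (index_quadNorms p hd) le_sup_left).symm.trans
      (heq (index_quadNorms p hde) le_sup_right)
  have htop : quadNorms e = ⊤ := by
    rw [eq_top_iff]
    intro c _
    by_cases hc : IsSquare (c : K)
    · exact mem_quadNorms_of_isSquare e hc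
    let D := Units.mk0 d hd0
    let E := Units.mk0 e he0
    have hsymm {a : Kˣ} (ha : ¬ IsSquare (a : K)) :
        c ∈ quadNorms (a : K) ↔ a ∈ quadNorms (c : K) :=
      ⟨mem_quadNorms_symm hc, mem_quadNorms_symm ha⟩
    have h1 := hsymm (a := D) hd
    have h2 := hsymm (a := D * E) (by simpa [D, E] using hde)
    have h3 := hmul hc D E
    have h4 : c ∈ quadNorms (D : K) ↔ c ∈ quadNorms ((D * E : Kˣ) : K) := by
      simp [D, E, hEq]
    exact (hsymm (a := E) he).2 (by tauto)
  have := index_quadNorms p he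
  rw [htop, Subgroup.index_top] at this
  omega

/-- An element of `E = K(√e)` whose norm to `K` is a norm from `K(√d)` is a norm from `E(√d)`. -/
lemma exists_eq_sq_sub_mul_sq (p : ℕ) [Fact p.Prime] {K : Type*} [Field K] [Algebra ℚ_[p] K]
    [FiniteDimensional ℚ_[p] K] {E : Type*} [Field E] [Algebra K E] {d e : K} (hd : ¬ IsSquare d)
    (he : ¬ IsSquare e) (hde : ¬ IsSquare (d * e)) {se : E} (hse : se ^ 2 = algebraMap K E e)
    {x a b : K} (h : x ^ 2 - e = a ^ 2 - d * b ^ 2) :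
    ∃ A B : E, algebraMap K E x - se = A ^ 2 - algebraMap K E d * B ^ 2 := by
  have : CharZero K := charZero_of_injective_algebraMap (algebraMap ℚ_[p] K).injective
  wlog hxa : x + a ≠ 0 generalizing a
  · refine this (a := -a) (by rw [h]; ring) fun hxa' ↦ ?_
    have ha : a = 0 := by
      have h2 : 2 * a = 0 := by linear_combination not_not.1 hxa - hxa'
      simpa using h2
    have hx : x = 0 := by simpa [ha] using hxa'
    refine hde ⟨d * b, ?_⟩
    rw [ha, hx] at h
    linear_combination -d * h
  have hc0 : 2 * (x + a) ≠ 0 := mul_ne_zero two_ne_zero hxa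
  have hc : Units.mk0 _ hc0 ∈ quadNorms d ⊔ quadNorms (d * e) := by
    rw [quadNorms_sup_quadNorms_mul p hd he hde]
    trivial
  obtain ⟨u, ⟨a₁, b₁, hu⟩, v, ⟨a₂, b₂, hv⟩, huv⟩ := Subgroup.mem_sup.1 hc
  have hcuv : 2 * (x + a) = (a₁ ^ 2 - d * b₁ ^ 2) * (a₂ ^ 2 - d * e * b₂ ^ 2) := by
    rw [← hu, ← hv, ← Units.val_mul, huv, Units.val_mk0]
  have hcE0 : algebraMap K E (2 * (x + a)) ≠ 0 := (map_ne_zero (algebraMap K E)).2 hc0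
  have hmul {y z : E} (hy : ∃ A B : E, y = A ^ 2 - algebraMap K E d * B ^ 2)
      (hz : ∃ A B : E, z = A ^ 2 - algebraMap K E d * B ^ 2) :
      ∃ A B : E, y * z = A ^ 2 - algebraMap K E d * B ^ 2 := by
    obtain ⟨A, B, rfl⟩ := hy
    obtain ⟨A', B', rfl⟩ := hz
    exact ⟨A * A' + algebraMap K E d * B * B', A * B' + B * A', by ring⟩
  have hcE : ∃ A B : E, algebraMap K E (2 * (x + a)) = A ^ 2 - algebraMap K E d * B ^ 2 := by
    rw [hcuv, map_mul]
    refine hmul ⟨algebraMap K E a₁, algebraMap K E b₁, by simp⟩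
      ⟨algebraMap K E a₂, se * algebraMap K E b₂, ?_⟩
    simp only [map_sub, map_mul, map_pow, ← hse]
    ring
  have hprod : ∃ A B : E, algebraMap K E (2 * (x + a)) * (algebraMap K E x - se) =
      A ^ 2 - algebraMap K E d * B ^ 2 := by
    refine ⟨algebraMap K E (x + a) - se, algebraMap K E b, ?_⟩
    have h' := congrArg (algebraMap K E) h
    simp only [map_add, map_sub, map_mul, map_pow, map_ofNat, ← hse] at h' ⊢
    linear_combination h'
  obtain ⟨A, B, hAB⟩ := hmul hcE hprod
  refine ⟨A / algebraMap K E (2 * (x + a)), B / algebraMap K E (2 * (x + a)), ?_⟩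
  rw [div_pow, div_pow, mul_div_assoc', ← sub_div, ← hAB]
  field_simp

/-- Norms are compatible with the tower `K ⊆ E ⊆ E(√d)`. -/
lemma exists_norm_eq_sq_sub_mul_sq {K E : Type*} [Field K] [Field E] [Algebra K E] {d e : K}
    (he : ¬ IsSquare e) (hE2 : finrank K E = 2) {se : E} (hse : se ^ 2 = algebraMap K E e)
    {x : K} {A B : E} (h : algebraMap K E x - se = A ^ 2 - algebraMap K E d * B ^ 2) :
    ∃ a b : K, x ^ 2 - e = a ^ 2 - d * b ^ 2 := by
  obtain ⟨a₁, a₂, rfl⟩ := exists_eq_add_mul_sqrt he hE2 hse A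
  obtain ⟨b₁, b₂, rfl⟩ := exists_eq_add_mul_sqrt he hE2 hse B
  have h0 : algebraMap K E (a₁ ^ 2 + e * a₂ ^ 2 - d * (b₁ ^ 2 + e * b₂ ^ 2) - x) +
      algebraMap K E (2 * a₁ * a₂ - 2 * d * b₁ * b₂ + 1) * se = 0 := by
    simp only [map_add, map_sub, map_mul, map_pow, map_ofNat, map_one, ← hse]
    linear_combination -h
  obtain ⟨h1, h2⟩ := eq_zero_of_add_mul_sqrt_eq_zero he hse h0
  refine ⟨(a₁ ^ 2 - e * a₂ ^ 2) + d * (b₁ ^ 2 - e * b₂ ^ 2), 2 * (a₁ * b₁ - e * a₂ * b₂), ?_⟩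
  linear_combination -(a₁ ^ 2 + e * a₂ ^ 2 - d * (b₁ ^ 2 + e * b₂ ^ 2) + x) * h1 +
    e * (2 * a₁ * a₂ - 2 * d * b₁ * b₂ - 1) * h2

/-- Lemma 2.2 (diagonal property): for non-isomorphic quadratic extensions `L = K(√d)` and
`E = K(√e)` of a `p`-adic field `K`, with compositum `LE` and a fixed square root `se = √e ∈ E`:
(a) `-e ∈ N_{L/K}(L*) ↔ -√e ∈ N_{LE/E}((LE)*)`; and
(b) for every `x ∈ K*` with `x(x² - e) ∈ N_{L/K}(L*)`,
`x ∈ N_{L/K}(L*) ↔ x - √e ∈ N_{LE/E}((LE)*)`. -/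
theorem stmt_2 (p : ℕ) [Fact p.Prime]
    (K : Type*) [Field K] [Algebra ℚ_[p] K] [FiniteDimensional ℚ_[p] K]
    (d e : K) (hd0 : d ≠ 0) (he0 : e ≠ 0)
    (hd : ¬ IsSquare d) (he : ¬ IsSquare e) (hde : ¬ IsSquare (d * e))
    (L : Type*) [Field L] [Algebra K L] (hL2 : finrank K L = 2)
    (hLd : ∃ s : L, s ^ 2 = algebraMap K L d)
    (E : Type*) [Field E] [Algebra K E] (hE2 : finrank K E = 2)
    (se : E) (hse : se ^ 2 = algebraMap K E e)
    (LE : Type*) [Field LE] [Algebra E LE] [Algebra K LE] [IsScalarTower K E LE]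
    (hLE2 : finrank E LE = 2)
    (hLEd : ∃ s : LE, s ^ 2 = algebraMap K LE d) :
    (-e ∈ normGroup K L ↔ -se ∈ normGroup E LE) ∧
    (∀ x : K, x ≠ 0 → x * (x ^ 2 - e) ∈ normGroup K L →
      (x ∈ normGroup K L ↔ algebraMap K E x - se ∈ normGroup E LE)) := by
  have : CharZero K := charZero_of_injective_algebraMap (algebraMap ℚ_[p] K).injective
  obtain ⟨sL, hsL⟩ := hLd
  obtain ⟨sLE, hsLE⟩ := hLEd
  have hdE : ¬ IsSquare (algebraMap K E d) := by
    rw [isSquare_algebraMap_iff he hE2 hse, not_or, mul_comm]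
    exact ⟨hd, hde⟩
  have hL (y : K) := mem_normGroup_iff hd hL2 hsL y
  have hLE (y : E) := mem_normGroup_iff hdE hLE2
    (hsLE.trans (IsScalarTower.algebraMap_apply K E LE d)) y
  have key (x : K) : x ^ 2 - e ∈ normGroup K L ↔ algebraMap K E x - se ∈ normGroup E LE := by
    have h1 : x ^ 2 - e ≠ 0 := fun h ↦ he ⟨x, by linear_combination -h⟩
    have h2 : algebraMap K E x - se ≠ 0 := by
      intro h
      apply h1
      apply (algebraMap K E).injective
      rw [map_sub, map_pow, map_zero, ← hse]
      linear_combination (algebraMap K E x + se) * h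
    rw [hL, hLE]
    constructor
    · rintro ⟨-, a, b, hab⟩
      exact ⟨h2, exists_eq_sq_sub_mul_sq p hd he hde hse hab⟩
    · rintro ⟨-, A, B, hAB⟩
      exact ⟨h1, exists_norm_eq_sq_sub_mul_sq he hE2 hse hAB⟩
  refine ⟨by simpa using key 0, fun x hx hxe ↦ ?_⟩
  rw [← key]
  have hne : x ^ 2 - e ≠ 0 := fun h ↦ he ⟨x, by linear_combination -h⟩
  have hN {y : K} (hy : y ≠ 0) : y ∈ normGroup K L ↔ Units.mk0 y hy ∈ quadNorms d := by
    rw [hL, mem_quadNorms, and_iff_right hy]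
    rfl
  rw [hN (mul_ne_zero hx hne), Units.mk0_mul,
    Subgroup.mul_mem_iff_of_index_two (index_quadNorms p hd)] at hxe
  rw [hN hx, hN hne]
  exact hxe
end

section
/- Let p be an odd prime, K a finite extension of ℚ_p with normalized discrete valuation v_K, and let e ∈ K* with v_K(e) odd. Let d ∈ K* be a non-square such that de ∉ (K*)² (so L = K(√d) and E = K(√e) are non-isomorphic quadratic extensions of K). Then −e ∉ N_{L/K}(L*). -/
open Module

/-- `v` is the normalized discrete valuation of the `p`-adic field `K`. -/
def IsNormalizedValuation (p : ℕ) [Fact p.Prime] {K : Type*} [Field K] [Algebra ℚ_[p] K]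
    (v : K → ℤ) : Prop :=
  (∀ x y : K, x ≠ 0 → y ≠ 0 → v (x * y) = v x + v y) ∧
  (∀ x y : K, x ≠ 0 → y ≠ 0 → x + y ≠ 0 → min (v x) (v y) ≤ v (x + y)) ∧
  (∀ n : ℤ, ∃ x : K, x ≠ 0 ∧ v x = n) ∧
  0 < v (algebraMap ℚ_[p] K (p : ℚ_[p]))

/-- In a complete ultrametric field of residue characteristic different from two,
every principal unit is a square. -/
theorem isSquare_one_add_of_norm_lt_one {K : Type*} [NormedField K] [CompleteSpace K]
    [IsUltrametricDist K] (h2 : ‖(2 : K)‖ = 1) {u : K} (hu : ‖u‖ < 1) : IsSquare (1 + u) := by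
  have h20 : (2 : K) ≠ 0 := by
    rw [← norm_ne_zero_iff, h2]
    exact one_ne_zero
  let f : K → K := fun z ↦ (u - z ^ 2) / 2
  let s : Set K := Metric.closedBall 0 ‖u‖
  have hs : ∀ {z : K}, z ∈ s ↔ ‖z‖ ≤ ‖u‖ := by simp [s]
  have hmaps : Set.MapsTo f s s := by
    intro z hz
    rw [hs] at hz ⊢
    rw [norm_div, h2, div_one]
    rw [sub_eq_add_neg]
    refine (IsUltrametricDist.norm_add_le_max _ _).trans (max_le le_rfl ?_)
    rw [norm_neg, norm_pow]
    nlinarith [norm_nonneg z, norm_nonneg u]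
  have hcontr : ContractingWith ‖u‖₊ (hmaps.restrict f s s) := by
    refine ⟨by exact_mod_cast hu, LipschitzWith.of_dist_le_mul ?_⟩
    rintro ⟨z, hz⟩ ⟨w, hw⟩
    rw [hs] at hz hw
    simp only [Subtype.dist_eq, Set.MapsTo.val_restrict_apply, dist_eq_norm, coe_nnnorm]
    have h : f z - f w = -((z + w) * (z - w)) / 2 := by
      simp only [f]
      ring
    rw [h, norm_div, h2, div_one, norm_neg, norm_mul]
    gcongr
    exact (IsUltrametricDist.norm_add_le_max _ _).trans (max_le hz hw)
  obtain ⟨z, -, hz, -⟩ := hcontr.exists_fixedPoint' Metric.isClosed_closedBall.isComplete hmaps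
    (hs.2 (by simp) : (0 : K) ∈ s) (edist_ne_top _ _)
  refine ⟨1 + z, ?_⟩
  have hz' : (u - z ^ 2) / 2 = z := hz
  rw [div_eq_iff h20] at hz'
  linear_combination hz'

/-- A `p`-adic integer congruent to `1` modulo `p` is an `n`-th power for every `n` prime
to `p`. -/
theorem PadicInt.exists_pow_eq_one_add_p_mul (p : ℕ) [Fact p.Prime] {n : ℕ} (hn : n.Coprime p)
    (z : ℤ_[p]) : ∃ y : ℤ_[p], y ^ n = 1 + p * z := by
  let F : Polynomial ℤ_[p] := Polynomial.X ^ n - Polynomial.C (1 + p * z)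
  have hnn : ‖(n : ℤ_[p])‖ = 1 := PadicInt.norm_natCast_eq_one_iff.2 hn.symm
  have hF : F.aeval (1 : ℤ_[p]) = -(p * z) := by simp [F]
  have hF' : F.derivative.aeval (1 : ℤ_[p]) = n := by simp [F, Polynomial.derivative_X_pow]
  have hlt : ‖F.aeval (1 : ℤ_[p])‖ < ‖F.derivative.aeval (1 : ℤ_[p])‖ ^ 2 := by
    rw [hF, hF', hnn, norm_neg, norm_mul, one_pow]
    exact mul_lt_one_of_nonneg_of_lt_one_left (norm_nonneg _) Padic.norm_p_lt_one
      (PadicInt.norm_le_one z)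
  obtain ⟨y, hy, -⟩ := hensels_lemma hlt
  refine ⟨y, ?_⟩
  simpa [F, sub_eq_zero] using hy

namespace IsNormalizedValuation

variable {p : ℕ} [Fact p.Prime] {K : Type*} [Field K] [Algebra ℚ_[p] K] {v : K → ℤ}

theorem map_mul (hv : IsNormalizedValuation p v) {x y : K} (hx : x ≠ 0) (hy : y ≠ 0) :
    v (x * y) = v x + v y :=
  hv.1 x y hx hy

theorem min_le_map_add (hv : IsNormalizedValuation p v) {x y : K} (hx : x ≠ 0) (hy : y ≠ 0)
    (hxy : x + y ≠ 0) : min (v x) (v y) ≤ v (x + y) :=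
  hv.2.1 x y hx hy hxy

theorem map_one (hv : IsNormalizedValuation p v) : v 1 = 0 := by
  have h := hv.map_mul (one_ne_zero (α := K)) one_ne_zero
  rw [mul_one] at h
  lia

theorem map_pow (hv : IsNormalizedValuation p v) {x : K} (hx : x ≠ 0) (n : ℕ) :
    v (x ^ n) = n * v x := by
  induction n with
  | zero => simp [hv.map_one]
  | succ n ih =>
    rw [pow_succ, hv.map_mul (pow_ne_zero n hx) hx, ih]
    push_cast
    ring

theorem map_inv (hv : IsNormalizedValuation p v) {x : K} (hx : x ≠ 0) : v x⁻¹ = -v x := by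
  have h := hv.map_mul hx (inv_ne_zero hx)
  rw [mul_inv_cancel₀ hx, hv.map_one] at h
  lia

theorem map_zpow (hv : IsNormalizedValuation p v) {x : K} (hx : x ≠ 0) (n : ℤ) :
    v (x ^ n) = n * v x := by
  cases n with
  | ofNat n => simpa using hv.map_pow hx n
  | negSucc n =>
    rw [zpow_negSucc, hv.map_inv (pow_ne_zero _ hx), hv.map_pow hx]
    push_cast [Int.negSucc_eq]
    ring

theorem map_neg (hv : IsNormalizedValuation p v) {x : K} (hx : x ≠ 0) : v (-x) = v x := by
  have h1 := hv.map_pow (neg_ne_zero.2 hx) 2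
  rw [neg_sq, hv.map_pow hx] at h1
  push_cast at h1
  lia

theorem map_add_of_lt (hv : IsNormalizedValuation p v) {x y : K} (hx : x ≠ 0) (hy : y ≠ 0)
    (hxy : v x < v y) : x + y ≠ 0 ∧ v (x + y) = v x := by
  have h0 : x + y ≠ 0 := fun h ↦ by
    rw [eq_neg_of_add_eq_zero_left h, hv.map_neg hy] at hxy
    exact lt_irrefl _ hxy
  refine ⟨h0, ?_⟩
  have h1 := hv.min_le_map_add hx hy h0
  have h2 := hv.min_le_map_add h0 (neg_ne_zero.2 hy) (by simpa using hx)
  rw [hv.map_neg hy, add_neg_cancel_right] at h2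
  lia

/-- A normalized valuation is nonnegative on `ℤ_[p]`. -/
theorem map_padicInt_nonneg (hv : IsNormalizedValuation p v) {z : ℤ_[p]} (hz : z ≠ 0) :
    0 ≤ v (algebraMap ℚ_[p] K z) := by
  by_contra! hneg
  set a : K := algebraMap ℚ_[p] K z
  set b : K := algebraMap ℚ_[p] K p
  have ha : a ≠ 0 := by simpa [a] using hz
  have hb : b ≠ 0 := by
    rw [Ne, map_eq_zero_iff _ (algebraMap ℚ_[p] K).injective, Nat.cast_eq_zero]
    exact (Fact.out : p.Prime).ne_zero
  set c : ℤ := v b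
  have hc : 0 < c := hv.2.2.2
  -- some multiple of `z` still divisible by `p` has negative valuation
  set m : ℕ := c.toNat + 1
  have hm : v (b * a ^ m) = c + m * v a := by
    rw [hv.map_mul hb (pow_ne_zero m ha), hv.map_pow ha]
  set k : ℤ := c + m * v a
  have hk : k < 0 := by
    have : (m : ℤ) = c + 1 := by simp [m, hc.le]
    simp only [k, this]
    nlinarith
  have hw0 : b * a ^ m ≠ 0 := mul_ne_zero hb (pow_ne_zero m ha)
  obtain ⟨h0, hadd⟩ := hv.map_add_of_lt hw0 one_ne_zero (by rw [hm, hv.map_one]; exact hk)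
  have hcop : (p * k.natAbs + 1).Coprime p := by
    simp
  obtain ⟨y, hy⟩ := PadicInt.exists_pow_eq_one_add_p_mul p hcop (z ^ m)
  have hy' : (algebraMap ℚ_[p] K y) ^ (p * k.natAbs + 1) = b * a ^ m + 1 := by
    rw [← _root_.map_pow, ← PadicInt.coe_pow, hy]
    simp [a, b, add_comm]
  have hy0 : algebraMap ℚ_[p] K y ≠ 0 := fun h ↦ by
    rw [h, zero_pow (Nat.succ_ne_zero _)] at hy'
    exact h0 hy'.symm
  have hdiv := hv.map_pow hy0 (p * k.natAbs + 1)
  rw [hy', hadd, hm] at hdiv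
  have hle := Int.le_of_dvd (neg_pos.2 hk) ((Dvd.intro _ hdiv.symm).neg_right)
  have hp1 : (1 : ℤ) ≤ p := by exact_mod_cast (Fact.out : p.Prime).one_le
  push_cast at hle
  rw [abs_of_neg hk] at hle
  nlinarith

theorem map_padic (hv : IsNormalizedValuation p v) {r : ℚ_[p]} (hr : r ≠ 0) :
    v (algebraMap ℚ_[p] K r) = r.valuation * v (algebraMap ℚ_[p] K p) := by
  have hnonneg : ∀ x : ℚ_[p], x ≠ 0 → ‖x‖ ≤ 1 → 0 ≤ v (algebraMap ℚ_[p] K x) := by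
    intro x hx hx1
    exact hv.map_padicInt_nonneg (z := ⟨x, hx1⟩) (fun h ↦ hx (congrArg Subtype.val h))
  have hp0 : (p : ℚ_[p]) ≠ 0 := by exact_mod_cast (Fact.out : p.Prime).ne_zero
  have hpn : (p : ℚ_[p]) ^ r.valuation ≠ 0 := zpow_ne_zero _ hp0
  set w : ℚ_[p] := r / (p : ℚ_[p]) ^ r.valuation with hw
  have hw0 : w ≠ 0 := div_ne_zero hr hpn
  have hw1 : ‖w‖ = 1 := by
    have hpr : (p : ℝ) ≠ 0 := by exact_mod_cast (Fact.out : p.Prime).ne_zero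
    rw [hw, norm_div, Padic.norm_p_zpow, Padic.norm_eq_zpow_neg_valuation hr,
      div_self (zpow_ne_zero _ hpr)]
  have hinj : ∀ {x : ℚ_[p]}, x ≠ 0 → algebraMap ℚ_[p] K x ≠ 0 := fun hx ↦ by simpa using hx
  have h1 := hnonneg w hw0 hw1.le
  have h2 := hnonneg w⁻¹ (inv_ne_zero hw0) (by rw [norm_inv, hw1, inv_one])
  rw [map_inv₀, hv.map_inv (hinj hw0)] at h2
  have hrw : r = w * (p : ℚ_[p]) ^ r.valuation := by rw [hw, div_mul_cancel₀ _ hpn]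
  calc v (algebraMap ℚ_[p] K r)
      = v (algebraMap ℚ_[p] K w * algebraMap ℚ_[p] K p ^ r.valuation) := by
        rw [← map_zpow₀, ← _root_.map_mul, ← hrw]
    _ = r.valuation * v (algebraMap ℚ_[p] K p) := by
        rw [hv.map_mul (hinj hw0) (zpow_ne_zero _ (hinj hp0)), hv.map_zpow (hinj hp0)]
        lia

open Classical in
/-- The absolute value attached to a normalized valuation, scaled to extend the `p`-adic one. -/
noncomputable def absValue (hv : IsNormalizedValuation p v) : AbsoluteValue K ℝ where
  toFun x := if x = 0 then 0 else (p : ℝ) ^ (-(v x : ℝ) / v (algebraMap ℚ_[p] K p))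
  map_mul' x y := by
    have hp : (0 : ℝ) < p := by exact_mod_cast (Fact.out : p.Prime).pos
    by_cases hx : x = 0
    · simp [hx]
    by_cases hy : y = 0
    · simp [hy]
    simp only [hx, hy, mul_eq_zero, or_self, if_false, hv.map_mul hx hy]
    rw [← Real.rpow_add hp]
    push_cast
    ring_nf
  nonneg' x := by
    split_ifs <;> positivity
  eq_zero' x := by
    have hp : (0 : ℝ) < p := by exact_mod_cast (Fact.out : p.Prime).pos
    split_ifs with h
    · simp [h]
    · simpa [h] using (Real.rpow_pos_of_pos hp _).ne'
  add_le' x y := by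
    have hp : (1 : ℝ) ≤ p := by exact_mod_cast (Fact.out : p.Prime).one_le
    have hc : (0 : ℝ) < v (algebraMap ℚ_[p] K p) := by exact_mod_cast hv.2.2.2
    by_cases hx : x = 0
    · simp [hx]
    by_cases hy : y = 0
    · simp [hy]
    by_cases hxy : x + y = 0
    · simp only [hx, hy, hxy, if_true, if_false]
      positivity
    simp only [hx, hy, hxy, if_false]
    rcases min_le_iff.1 (hv.min_le_map_add hx hy hxy) with h | h
    · refine le_add_of_le_of_nonneg ?_ (by positivity)
      gcongr
    · refine le_add_of_nonneg_of_le (by positivity) ?_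
      gcongr

theorem absValue_apply (hv : IsNormalizedValuation p v) {x : K} (hx : x ≠ 0) :
    hv.absValue x = (p : ℝ) ^ (-(v x : ℝ) / v (algebraMap ℚ_[p] K p)) :=
  if_neg hx

theorem absValue_le_iff (hv : IsNormalizedValuation p v) {x y : K} (hx : x ≠ 0) (hy : y ≠ 0) :
    hv.absValue x ≤ hv.absValue y ↔ v y ≤ v x := by
  have hp : (1 : ℝ) < p := by exact_mod_cast (Fact.out : p.Prime).one_lt
  have hc : (0 : ℝ) < v (algebraMap ℚ_[p] K p) := by exact_mod_cast hv.2.2.2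
  rw [hv.absValue_apply hx, hv.absValue_apply hy, Real.rpow_le_rpow_left_iff hp,
    div_le_div_iff_of_pos_right hc, neg_le_neg_iff, Int.cast_le]

theorem absValue_add_le_max (hv : IsNormalizedValuation p v) (x y : K) :
    hv.absValue (x + y) ≤ max (hv.absValue x) (hv.absValue y) := by
  by_cases hx : x = 0
  · simp [hx]
  by_cases hy : y = 0
  · simp [hy]
  by_cases hxy : x + y = 0
  · simp [hxy]
  rw [le_max_iff, hv.absValue_le_iff hxy hx, hv.absValue_le_iff hxy hy, ← min_le_iff]
  exact hv.min_le_map_add hx hy hxy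

theorem absValue_algebraMap (hv : IsNormalizedValuation p v) (r : ℚ_[p]) :
    hv.absValue (algebraMap ℚ_[p] K r) = ‖r‖ := by
  by_cases hr : r = 0
  · simp [hr]
  have hc : (v (algebraMap ℚ_[p] K p) : ℝ) ≠ 0 := by exact_mod_cast hv.2.2.2.ne'
  rw [hv.absValue_apply (by simpa using hr), hv.map_padic hr, Padic.norm_eq_zpow_neg_valuation hr,
    ← Real.rpow_intCast]
  congr 1
  rw [Int.cast_mul, Int.cast_neg, neg_div, mul_div_cancel_right₀ _ hc]

/-- For odd `p`, the principal units of a `p`-adic field are squares. -/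
theorem isSquare_one_add [FiniteDimensional ℚ_[p] K] (hv : IsNormalizedValuation p v)
    (hp : p ≠ 2) {u : K} (hu : u = 0 ∨ 0 < v u) : IsSquare (1 + u) := by
  let : NormedField K := hv.absValue.toNormedField
  have hnorm : ∀ x : K, ‖x‖ = hv.absValue x := fun _ ↦ rfl
  let : NormedSpace ℚ_[p] K :=
    { norm_smul_le := fun r x ↦ by
        rw [Algebra.smul_def, norm_mul, hnorm, hv.absValue_algebraMap] }
  have : CompleteSpace K := FiniteDimensional.complete ℚ_[p] K
  have : IsUltrametricDist K :=
    IsUltrametricDist.isUltrametricDist_of_forall_norm_add_le_max_norm hv.absValue_add_le_max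
  refine isSquare_one_add_of_norm_lt_one ?_ ?_
  · have h := hv.absValue_algebraMap 2
    rw [map_ofNat] at h
    rw [hnorm, h]
    have h2 : ‖((2 : ℕ) : ℚ_[p])‖ = 1 := by
      rw [Padic.norm_natCast_eq_one_iff]
      exact (Nat.coprime_primes Fact.out Nat.prime_two).2 hp
    exact_mod_cast h2
  · rcases hu with rfl | hu
    · simp
    · by_cases hu0 : u = 0
      · simp [hu0]
      rw [hnorm, ← hv.absValue.map_one, ← not_le, hv.absValue_le_iff one_ne_zero hu0, hv.map_one]
      exact not_le.2 hu

end IsNormalizedValuation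

/-- Norms from a quadratic extension `K(√d)` have the form `a² - d b²`. -/
theorem Algebra.exists_norm_eq_sq_sub_mul_sq {K L : Type*} [Field K] [Field L] [Algebra K L]
    (hL : finrank K L = 2) {d : K} (hd : ¬ IsSquare d) {s : L} (hs : s ^ 2 = algebraMap K L d)
    (t : L) : ∃ a b : K, Algebra.norm K t = a ^ 2 - d * b ^ 2 := by
  have hli : LinearIndependent K ![(1 : L), s] := by
    rw [LinearIndependent.pair_iff' one_ne_zero]
    intro a ha
    refine hd ⟨a, (algebraMap K L).injective ?_⟩
    rw [← hs, ← ha, Algebra.smul_def, mul_one, map_mul, sq]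
  let B : Basis (Fin 2) K L := basisOfLinearIndependentOfCardEqFinrank hli (by simp [hL])
  have hB0 : B 0 = 1 := by simp [B]
  have hB1 : B 1 = s := by simp [B]
  obtain ⟨a, b, ht⟩ : ∃ a b : K, t = a • (1 : L) + b • s := by
    refine ⟨B.repr t 0, B.repr t 1, ?_⟩
    conv_lhs => rw [← B.sum_repr t]
    rw [Fin.sum_univ_two, hB0, hB1]
  have h0 : t * B 0 = a • B 0 + b • B 1 := by rw [hB0, hB1, mul_one, ht]
  have h1 : t * B 1 = (b * d) • B 0 + a • B 1 := by
    rw [hB0, hB1, ht]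
    simp only [Algebra.smul_def, map_mul]
    linear_combination algebraMap K L b * hs
  refine ⟨a, b, ?_⟩
  rw [Algebra.norm_eq_matrix_det B, Matrix.det_fin_two]
  simp only [Algebra.leftMulMatrix_eq_repr_mul, h0, h1]
  simp
  ring

/-- Case (2) of the proof of Theorem 1.2: `p` an odd prime, `K` a `p`-adic field,
`e ∈ K*` of odd valuation, `d ∈ K*` a non-square with `de ∉ (K*)²` (so `L = K(√d)` and
`E = K(√e)` are non-isomorphic quadratic extensions). Then `-e ∉ N_{L/K}(L*)`. -/
theorem stmt_7 (p : ℕ) [Fact p.Prime] (hp : p ≠ 2)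
    (K : Type*) [Field K] [Algebra ℚ_[p] K] [FiniteDimensional ℚ_[p] K]
    (vK : K → ℤ) (hvK : IsNormalizedValuation p vK)
    (e : K) (he0 : e ≠ 0) (hve : Odd (vK e))
    (d : K) (hd0 : d ≠ 0) (hd : ¬ IsSquare d) (hde : ¬ IsSquare (d * e))
    (L : Type*) [Field L] [Algebra K L] (hL2 : finrank K L = 2)
    (hLd : ∃ s : L, s ^ 2 = algebraMap K L d) :
    -e ∉ normGroup K L := by
  rintro ⟨t, -, ht⟩
  obtain ⟨s, hs⟩ := hLd
  obtain ⟨x, y, hxy⟩ := Algebra.exists_norm_eq_sq_sub_mul_sq hL2 hd hs t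
  have heq : d * y ^ 2 = x ^ 2 + e := by linear_combination hxy - ht
  have hy : y ≠ 0 := by
    rintro rfl
    have hx : e = -x ^ 2 := by linear_combination -heq
    have hx0 : x ≠ 0 := by
      rintro rfl
      exact he0 (by simpa using hx)
    rw [hx, hvK.map_neg (pow_ne_zero 2 hx0), hvK.map_pow hx0] at hve
    exact Int.not_odd_iff_even.2 (even_two_mul _) hve
  -- `d y² = x² + e`, and the term of smaller valuation fixes the square class of the sum
  by_cases hlt : x ≠ 0 ∧ vK (x ^ 2) < vK e
  · obtain ⟨hx0, hlt⟩ := hlt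
    obtain ⟨w, hw⟩ := hvK.isSquare_one_add hp (u := e * (x ^ 2)⁻¹) (.inr (by
      rw [hvK.map_mul he0 (by simpa using hx0), hvK.map_inv (by simpa using hx0)]
      lia))
    refine hd ⟨x * w / y, ?_⟩
    field_simp at hw ⊢
    linear_combination heq + hw
  · obtain ⟨w, hw⟩ := hvK.isSquare_one_add hp (u := x ^ 2 * e⁻¹) (by
      by_cases hx0 : x = 0
      · simp [hx0]
      right
      rw [hvK.map_mul (by simpa using hx0) (by simpa using he0), hvK.map_inv he0]
      have hle : vK e ≤ vK (x ^ 2) := not_lt.1 fun h ↦ hlt ⟨hx0, h⟩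
      rw [hvK.map_pow hx0] at hle ⊢
      obtain ⟨k, hk⟩ := hve
      push_cast at hle ⊢
      lia)
    refine hde ⟨e * w / y, ?_⟩
    field_simp at hw ⊢
    linear_combination heq + hw
end
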